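/- There exists a unique representation basis A of the integers such that limsup_{x→∞} A(-x,x)/√x ≥ √2/2. -/

import Mathlib

open Filter Set

/-- `repCount A n` is the number of representations of `n` as `a + a'` with
`a ≤ a'` and `a, a' ∈ A`. -/
noncomputable def repCount (A : Set ℤ) (n : ℤ) : ℕ :=
  {p : ℤ × ℤ | p.1 ∈ A ∧ p.2 ∈ A ∧ p.1 ≤ p.2 ∧ p.1 + p.2 = n}.ncard

/-- `A` is a unique representation basis of `ℤ` if `r_A(n) = 1` for all `n`. -/
def IsUniqueRepBasis (A : Set ℤ) : Prop := ∀ n : ℤ, repCount A n = 1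

/-- `countIn A y x` is the number of elements of `A` in the real interval `[y, x]`. -/
noncomputable def countIn (A : Set ℤ) (y x : ℝ) : ℕ :=
  {a : ℤ | a ∈ A ∧ y ≤ (a : ℝ) ∧ (a : ℝ) ≤ x}.ncard

/-- Sidon property (unordered sums are distinct). -/
def SidonS (A : Set ℤ) : Prop :=
  ∀ a ∈ A, ∀ b ∈ A, ∀ c ∈ A, ∀ d ∈ A, a + b = c + d → (a = c ∧ b = d) ∨ (a = d ∧ b = c)

lemma ruzsa (p : ℕ) (hp : p.Prime) (hp3 : 3 ≤ p) :
    ∃ B : Finset ℤ, SidonS (B : Set ℤ) ∧ B.card = p - 1 ∧ ∀ b ∈ B, 0 ≤ b ∧ b < (p : ℤ) * p := by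
  classical
  have : Fact p.Prime := ⟨hp⟩
  obtain ⟨g, hg⟩ := IsCyclic.exists_generator (α := (ZMod p)ˣ)
  have hord : orderOf g = p - 1 := by
    rw [orderOf_eq_card_of_forall_mem_zpowers hg, Nat.card_eq_fintype_card, ZMod.card_units]
  have hco : Nat.Coprime (p - 1) p := by
    have h := Nat.coprime_self_sub_right (m := 1) (n := p) (by omega)
    rw [Nat.coprime_comm]
    simpa using h
  let f : ℕ → ℕ := fun i => (Nat.chineseRemainder hco i ((g ^ i : (ZMod p)ˣ) : ZMod p).val : ℕ)
  have f1 : ∀ i, f i ≡ i [MOD (p - 1)] := fun i =>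
    (Nat.chineseRemainder hco i ((g ^ i : (ZMod p)ˣ) : ZMod p).val).2.1
  have f2 : ∀ i, (f i : ZMod p) = (g : ZMod p) ^ i := by
    intro i
    have h := (Nat.chineseRemainder hco i ((g ^ i : (ZMod p)ˣ) : ZMod p).val).2.2
    have h2 := (ZMod.natCast_eq_natCast_iff _ _ _).2 h
    rw [ZMod.natCast_zmod_val] at h2
    rw [← Units.val_pow_eq_pow_val]
    exact h2
  have f3 : ∀ i, f i < (p - 1) * p := fun i =>
    Nat.chineseRemainder_lt_mul hco _ _ (by omega) (by omega)
  have ginj : ∀ i < p - 1, ∀ j < p - 1, (g : ZMod p) ^ i = (g : ZMod p) ^ j → i = j := by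
    intro i hi j hj h
    have h' : g ^ i = g ^ j := by
      ext; simpa using h
    exact pow_injOn_Iio_orderOf (by simpa [hord] using hi) (by simpa [hord] using hj) h'
  have finj : ∀ i < p - 1, ∀ j < p - 1, f i = f j → i = j := by
    intro i hi j hj h
    apply ginj i hi j hj
    rw [← f2, ← f2, h]
  refine ⟨(Finset.range (p - 1)).image (fun i => (f i : ℤ)), ?_, ?_, ?_⟩
  · intro a ha b hb c hc d hd h
    simp only [Finset.coe_image, Set.mem_image, Finset.mem_coe, Finset.mem_range] at ha hb hc hd
    obtain ⟨i, hi, rfl⟩ := ha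
    obtain ⟨j, hj, rfl⟩ := hb
    obtain ⟨k, hk, rfl⟩ := hc
    obtain ⟨l, hl, rfl⟩ := hd
    have hN : f i + f j = f k + f l := by exact_mod_cast h
    have hs : (g : ZMod p) ^ i + (g : ZMod p) ^ j = (g : ZMod p) ^ k + (g : ZMod p) ^ l := by
      rw [← f2, ← f2, ← f2, ← f2]; exact_mod_cast congrArg (Nat.cast (R := ZMod p)) hN
    have hm : i + j ≡ k + l [MOD (p - 1)] :=
      (((f1 i).add (f1 j)).symm.trans (by rw [hN])).trans ((f1 k).add (f1 l))
    have hpr : (g : ZMod p) ^ i * (g : ZMod p) ^ j = (g : ZMod p) ^ k * (g : ZMod p) ^ l := by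
      rw [← pow_add, ← pow_add]
      rw [← hord] at hm
      have := pow_eq_pow_iff_modEq.2 hm
      simpa using congrArg (Units.val) this
    have hz : ((g : ZMod p) ^ k - (g : ZMod p) ^ i) * ((g : ZMod p) ^ k - (g : ZMod p) ^ j) = 0 := by
      linear_combination hpr - (g : ZMod p) ^ k * hs
    rcases mul_eq_zero.1 hz with h0 | h0
    · have := ginj k hk i hi (sub_eq_zero.1 h0)
      subst this
      left; exact ⟨rfl, by linarith⟩
    · have := ginj k hk j hj (sub_eq_zero.1 h0)
      subst this
      right; exact ⟨by linarith, rfl⟩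
  · rw [Finset.card_image_of_injOn, Finset.card_range]
    intro i hi j hj h
    simp only [Finset.coe_range, Set.mem_Iio] at hi hj
    exact finj i hi j hj (by simpa using h)
  · intro b hb
    simp only [Finset.mem_image, Finset.mem_range] at hb
    obtain ⟨i, hi, rfl⟩ := hb
    refine ⟨by positivity, ?_⟩
    have h1 := f3 i
    have h2 : (p - 1) * p ≤ p * p := Nat.mul_le_mul_right _ (by omega)
    exact_mod_cast lt_of_lt_of_le h1 h2

lemma exists_bound (A : Finset ℤ) : ∃ M : ℕ, ∀ a ∈ A, -(M : ℤ) ≤ a ∧ a ≤ M := by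
  refine ⟨A.sup Int.natAbs, fun a ha => ?_⟩
  have := Finset.le_sup (f := Int.natAbs) ha
  omega

lemma step1 (A : Finset ℤ) (hA : SidonS (A : Set ℤ)) (n : ℤ) :
    ∃ A' : Finset ℤ, A ⊆ A' ∧ SidonS (A' : Set ℤ) ∧ ∃ a ∈ A', ∃ b ∈ A', a + b = n := by
  classical
  by_cases hn : ∃ a ∈ A, ∃ b ∈ A, a + b = n
  · exact ⟨A, subset_rfl, hA, hn⟩
  obtain ⟨M, hM⟩ := exists_bound A
  push Not at hn
  obtain ⟨u, hu⟩ : ∃ u : ℤ, u = 4 * M + 4 * |n| + 4 := ⟨_, rfl⟩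
  have hn1 := le_abs_self n
  have hn2 := neg_abs_le n
  refine ⟨insert u (insert (n - u) A), ?_, ?_, u, by simp, n - u, by simp, by ring⟩
  · intro x hx; simp [hx]
  · intro a ha b hb c hc d hd h
    simp only [Finset.coe_insert, Set.mem_insert_iff, Finset.mem_coe] at ha hb hc hd
    have H : ∀ x, x ∈ A → -(M : ℤ) ≤ x ∧ x ≤ M := hM
    rcases ha with ha | ha | ha <;> rcases hb with hb | hb | hb <;>
    rcases hc with hc | hc | hc <;> rcases hd with hd | hd | hd <;>
    first
    | exact hA a ha b hb c hc d hd h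
    | exact absurd (by omega) (hn a ha b hb)
    | exact absurd (by omega) (hn c hc d hd)
    | (try have := H a ha
       try have := H b hb
       try have := H c hc
       try have := H d hd
       clear H hn hA hM
       omega)

lemma step2 (A : Finset ℤ) (hA : SidonS (A : Set ℤ)) (k : ℕ) :
    ∃ A' : Finset ℤ, A ⊆ A' ∧ SidonS (A' : Set ℤ) ∧ ∃ x : ℝ, (k : ℝ) ≤ x ∧ 0 < x ∧
      ∃ F ⊆ A', (∀ a ∈ F, -x ≤ (a : ℝ) ∧ (a : ℝ) ≤ x) ∧
      Real.sqrt 2 / 2 * (1 - 1 / (k + 1)) ≤ F.card / Real.sqrt x := by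
  classical
  obtain ⟨M, hM⟩ := exists_bound A
  obtain ⟨c, hc⟩ : ∃ c : ℕ, c = 4 * M + 3 := ⟨_, rfl⟩
  obtain ⟨p, hpge, hp⟩ := Nat.exists_infinite_primes (2 * c * (k + 1) + k + 3)
  obtain ⟨B, hB, hBc, hBb⟩ := ruzsa p hp (by omega)
  let bad : Finset ℤ := B.filter (fun b => ∃ b' ∈ B, b' ≠ b ∧ |b - b'| ≤ 2 * M)
  have hbad : bad.card ≤ 4 * M + 1 := by
    have hex : ∀ b ∈ bad, ∃ b' ∈ B, b' ≠ b ∧ |b - b'| ≤ 2 * M := fun b hb =>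
      (Finset.mem_filter.1 hb).2
    choose! q hq using hex
    have h1 : bad.card ≤ (Finset.Icc (-(2 * M : ℤ)) (2 * M)).card := by
      apply Finset.card_le_card_of_injOn (fun b => b - q b)
      · intro b hb
        have := (hq b hb).2.2
        simp only [Finset.coe_Icc, Set.mem_Icc]
        exact abs_le.1 this
      · intro b hb b2 hb2 h
        have e1 := hq b hb
        have e2 := hq b2 hb2
        have := hB b (Finset.mem_filter.1 hb).1 (q b2) e2.1 b2 (Finset.mem_filter.1 hb2).1 (q b) e1.1
          (by simp only at h; linarith)
        rcases this with h | h
        · exact h.1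
        · exact absurd h.1.symm e1.2.1
    rw [Int.card_Icc] at h1
    omega
  obtain ⟨S, hS⟩ : ∃ S : ℤ, S = p * p + 4 * M + 1 := ⟨_, rfl⟩
  let F : Finset ℤ := (B \ bad).image (fun b => b + S)
  have hFc : p - c ≤ F.card := by
    have : F.card = (B \ bad).card :=
      Finset.card_image_of_injective _ (add_left_injective S)
    rw [this]
    have := Finset.le_card_sdiff bad B
    omega
  have hF : ∀ y ∈ F, y - S ∈ B ∧ ∀ b' ∈ B, b' ≠ y - S → ¬ |y - S - b'| ≤ 2 * M := by
    intro y hy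
    obtain ⟨b, hb, rfl⟩ := Finset.mem_image.1 hy
    rw [Finset.mem_sdiff] at hb
    simp only [add_sub_cancel_right]
    refine ⟨hb.1, fun b' hb' hne hle => hb.2 ?_⟩
    exact Finset.mem_filter.2 ⟨hb.1, b', hb', hne, hle⟩
  have hFb : ∀ y ∈ F, S ≤ y ∧ y < S + p * p := by
    intro y hy
    have := hBb _ (hF y hy).1
    constructor <;> linarith
  have hFS : ∀ a ∈ F, ∀ b ∈ F, ∀ c ∈ F, ∀ d ∈ F, a + b = c + d →
      (a = c ∧ b = d) ∨ (a = d ∧ b = c) := by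
    intro a ha b hb c hc d hd h
    have := hB _ (hF a ha).1 _ (hF b hb).1 _ (hF c hc).1 _ (hF d hd).1 (by linarith)
    omega
  -- mixed case
  have hmix : ∀ a ∈ A, ∀ a' ∈ A, ∀ y ∈ F, ∀ y' ∈ F, a + y = a' + y' → a = a' ∧ y = y' := by
    intro a ha a' ha' y hy y' hy' h
    by_cases e : y' = y
    · subst e; exact ⟨by linarith, rfl⟩
    · exfalso
      have h1 := hM a ha
      have h2 := hM a' ha'
      refine (hF y hy).2 (y' - S) (hF y' hy').1 (fun h => e (by linarith)) ?_
      rw [abs_le]; constructor <;> linarith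
  obtain ⟨P, hP⟩ : ∃ P : ℤ, P = p * p := ⟨_, rfl⟩
  have hP0 : 0 ≤ P := by rw [hP]; positivity
  rw [← hP] at hS hFb
  refine ⟨A ∪ F, Finset.subset_union_left, ?_, 2 * ((p : ℝ) + c) ^ 2, ?_, ?_, F,
    Finset.subset_union_right, ?_, ?_⟩
  · intro a ha b hb c hc d hd h
    simp only [Finset.coe_union, Set.mem_union, Finset.mem_coe] at ha hb hc hd
    rcases ha with ha | ha <;> rcases hb with hb | hb <;>
    rcases hc with hc | hc <;> rcases hd with hd | hd <;>
    first
    | exact hA a ha b hb c hc d hd h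
    | exact hFS a ha b hb c hc d hd h
    | exact Or.inl (hmix a ha c hc b hb d hd h)
    | (have := hmix b hb d hd a ha c hc (by linarith); omega)
    | (have := hmix a ha d hd b hb c hc (by linarith); omega)
    | (have := hmix b hb c hc a ha d hd (by linarith); omega)
    | (exfalso
       have a1 := hM a
       have b1 := hM b
       have c1 := hM c
       have d1 := hM d
       have a2 := hFb a
       have b2 := hFb b
       have c2 := hFb c
       have d2 := hFb d
       simp only [ha, hb, hc, hd, true_implies] at a1 b1 c1 d1 a2 b2 c2 d2
       clear hmix hFS hF hFb hM hA hB hBb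
       omega)
  · have h1 : (k : ℝ) ≤ p := by exact_mod_cast (by omega : k ≤ p)
    have h2 : (1 : ℝ) ≤ p := by exact_mod_cast hp.one_lt.le
    have h3 : (0 : ℝ) ≤ c := by positivity
    nlinarith
  · have h2 : (1 : ℝ) ≤ p := by exact_mod_cast hp.one_lt.le
    positivity
  · intro a ha
    have h := hFb a ha
    have h1 : a ≤ 2 * ((p : ℤ) + c) ^ 2 := by
      have : (c : ℤ) = 4 * M + 3 := by exact_mod_cast hc
      have hp0 : (0 : ℤ) ≤ p := by positivity
      have hM0 : (0 : ℤ) ≤ M := by positivity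
      rw [this]; nlinarith [mul_nonneg hp0 hM0]
    have h1' : (a : ℝ) ≤ 2 * ((p : ℝ) + c) ^ 2 := by exact_mod_cast h1
    have h0 : (0 : ℝ) ≤ a := by exact_mod_cast (by omega : 0 ≤ a)
    exact ⟨by linarith [sq_nonneg ((p : ℝ) + c)], h1'⟩
  · have hp1 : (0 : ℝ) < p := by exact_mod_cast hp.pos
    have hc0 : (0 : ℝ) ≤ c := by positivity
    have hs : Real.sqrt (2 * ((p : ℝ) + c) ^ 2) = Real.sqrt 2 * (p + c) := by
      rw [Real.sqrt_mul (by norm_num), Real.sqrt_sq (by positivity)]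
    have h2 : (0 : ℝ) < Real.sqrt 2 := by positivity
    have h22 : Real.sqrt 2 * Real.sqrt 2 = 2 := Real.mul_self_sqrt (by norm_num)
    rw [hs, le_div_iff₀ (by positivity)]
    have hcard : (p : ℝ) - c ≤ F.card := by
      have : p ≤ F.card + c := by omega
      have : (p : ℝ) ≤ F.card + c := by exact_mod_cast this
      linarith
    have hpk : 2 * (c : ℝ) * (k + 1) ≤ p := by
      exact_mod_cast (by omega : 2 * c * (k + 1) ≤ p)
    have e : Real.sqrt 2 / 2 * (1 - 1 / ((k : ℝ) + 1)) * (Real.sqrt 2 * (p + c))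
        = (1 - 1 / ((k : ℝ) + 1)) * (p + c) := by
      linear_combination (1 / 2) * (1 - 1 / ((k : ℝ) + 1)) * (p + c) * h22
    rw [e]
    refine le_trans ?_ hcard
    have : 2 * (c : ℝ) ≤ (p + c) / (k + 1) := by
      rw [le_div_iff₀ (by positivity)]; linarith
    have e2 : (1 - 1 / ((k : ℝ) + 1)) * (p + c) = (p + c) - (p + c) / (k + 1) := by ring
    rw [e2]; linarith

/-- The property of one stage. -/
def StageP (e : ℕ → ℤ) (k : ℕ) (A' : Set ℤ) : Prop :=
  (∃ a ∈ A', ∃ b ∈ A', a + b = e k) ∧ ∃ x : ℝ, (k : ℝ) ≤ x ∧ 0 < x ∧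
      ∃ F : Finset ℤ, (F : Set ℤ) ⊆ A' ∧ (∀ a ∈ F, -x ≤ (a : ℝ) ∧ (a : ℝ) ≤ x) ∧
      Real.sqrt 2 / 2 * (1 - 1 / (k + 1)) ≤ F.card / Real.sqrt x

lemma StageP.mono {e : ℕ → ℤ} {k : ℕ} {A B : Set ℤ} (h : StageP e k A) (hAB : A ⊆ B) :
    StageP e k B := by
  obtain ⟨⟨a, ha, b, hb, hab⟩, x, h1, h2, F, h3, h4⟩ := h
  exact ⟨⟨a, hAB ha, b, hAB hb, hab⟩, x, h1, h2, F, h3.trans hAB, h4⟩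

lemma exists_limit (e : ℕ → ℤ) : ∃ A : Set ℤ, SidonS A ∧ ∀ k, StageP e k A := by
  have step : ∀ (k : ℕ) (A : {A : Finset ℤ // SidonS (A : Set ℤ)}),
      ∃ A' : {A : Finset ℤ // SidonS (A : Set ℤ)}, A.1 ⊆ A'.1 ∧ StageP e k (A'.1 : Set ℤ) := by
    rintro k ⟨A, hA⟩
    obtain ⟨A1, h1, hA1, a, ha, b, hb, hab⟩ := step1 A hA (e k)
    obtain ⟨A2, h2, hA2, x, hx, hx0, F, hF, hF2⟩ := step2 A1 hA1 k
    exact ⟨⟨A2, hA2⟩, h1.trans h2, ⟨a, h2 ha, b, h2 hb, hab⟩, x, hx, hx0, F,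
      Finset.coe_subset.2 hF, hF2⟩
  choose nx hnx using step
  let s : ℕ → {A : Finset ℤ // SidonS (A : Set ℤ)} := fun n =>
    Nat.rec ⟨∅, by intro a ha; simp at ha⟩ (fun k A => nx k A) n
  have hs : ∀ n, s (n + 1) = nx n (s n) := fun n => rfl
  have hmono : Monotone (fun n => (s n).1) :=
    monotone_nat_of_le_succ (fun n => by rw [hs]; exact (hnx n (s n)).1)
  refine ⟨⋃ n, ((s n).1 : Set ℤ), ?_, ?_⟩
  · intro a ha b hb c hc d hd h
    simp only [Set.mem_iUnion, Finset.mem_coe] at ha hb hc hd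
    obtain ⟨i, ha⟩ := ha
    obtain ⟨j, hb⟩ := hb
    obtain ⟨k, hc⟩ := hc
    obtain ⟨l, hd⟩ := hd
    exact (s (i + j + k + l)).2 a (hmono (by omega : i ≤ i + j + k + l) ha)
      b (hmono (by omega : j ≤ i + j + k + l) hb) c (hmono (by omega : k ≤ i + j + k + l) hc)
      d (hmono (by omega : l ≤ i + j + k + l) hd) h
  · intro k
    have := (hnx k (s k)).2
    rw [← hs] at this
    exact this.mono (Set.subset_iUnion (fun n => ((s n).1 : Set ℤ)) (k + 1))

lemma finite_count (A : Set ℤ) (x : ℝ) :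
    {a : ℤ | a ∈ A ∧ -x ≤ (a : ℝ) ∧ (a : ℝ) ≤ x}.Finite := by
  apply (Set.finite_Icc (-⌊x⌋) ⌊x⌋).subset
  rintro a ⟨-, h1, h2⟩
  have h3 : a ≤ ⌊x⌋ := Int.le_floor.2 h2
  have h4 : -a ≤ ⌊x⌋ := Int.le_floor.2 (by push_cast; linarith)
  exact ⟨by linarith, h3⟩

lemma count_le (A : Set ℤ) (hA : SidonS A) (x : ℝ) (hx : 1 ≤ x) :
    (countIn A (-x) x : ℝ) / Real.sqrt x ≤ 4 := by
  classical
  have hfin := finite_count A x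
  have hc : countIn A (-x) x = hfin.toFinset.card := Set.ncard_eq_toFinset_card _ hfin
  rw [hc]
  set F := hfin.toFinset with hFdef
  have hF : ∀ a ∈ F, a ∈ A ∧ -⌊x⌋ ≤ a ∧ a ≤ ⌊x⌋ := by
    intro a ha
    obtain ⟨h0, h1, h2⟩ := hfin.mem_toFinset.1 ha
    have h3 : a ≤ ⌊x⌋ := Int.le_floor.2 h2
    have h4 : -a ≤ ⌊x⌋ := Int.le_floor.2 (by push_cast; linarith)
    exact ⟨h0, by linarith, h3⟩
  have hcard : (F ×ˢ F).card ≤ ((Finset.Icc (-(2 * ⌊x⌋)) (2 * ⌊x⌋)) ×ˢ (Finset.univ : Finset Bool)).card := by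
    apply Finset.card_le_card_of_injOn (fun q : ℤ × ℤ => (q.1 + q.2, decide (q.1 ≤ q.2)))
    · rintro ⟨a, b⟩ hab
      have hab := Finset.mem_product.1 hab
      have h1 := hF a hab.1
      have h2 := hF b hab.2
      simp
      omega
    · rintro ⟨a, b⟩ hab ⟨c, d⟩ hcd h
      have hab := Finset.mem_product.1 hab
      have hcd := Finset.mem_product.1 hcd
      simp only [Prod.mk.injEq, decide_eq_decide] at h ⊢
      have := hA a (hF a hab.1).1 b (hF b hab.2).1 c (hF c hcd.1).1 d (hF d hcd.2).1 h.1
      omega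
  rw [Finset.card_product, Finset.card_product, Int.card_Icc, Finset.card_univ, Fintype.card_bool] at hcard
  have hfl : 1 ≤ ⌊x⌋ := Int.le_floor.2 (by simpa using hx)
  have hz : (F.card : ℤ) * F.card ≤ (4 * ⌊x⌋ + 1) * 2 := by
    have : ((2 * ⌊x⌋ + 1 - -(2 * ⌊x⌋)).toNat : ℤ) = 4 * ⌊x⌋ + 1 := by omega
    rw [← this]; exact_mod_cast hcard
  have hr : (F.card : ℝ) * F.card ≤ (4 * ⌊x⌋ + 1) * 2 := by exact_mod_cast hz
  have hfx := Int.floor_le x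
  have hsx : Real.sqrt x * Real.sqrt x = x := Real.mul_self_sqrt (by linarith)
  have hs0 : 0 < Real.sqrt x := Real.sqrt_pos.2 (by linarith)
  rw [div_le_iff₀ hs0]
  by_contra hlt
  push Not at hlt
  nlinarith

/-- There exists a unique representation basis `A` such that
`limsup_{x→∞} A(-x,x)/√x ≥ √2/2`. -/
theorem exists_urb_limsup_ge :
    ∃ A : Set ℤ, IsUniqueRepBasis A ∧
      Real.sqrt 2 / 2 ≤
        limsup (fun x : ℝ => (countIn A (-x) x : ℝ) / Real.sqrt x) atTop := by
  obtain ⟨e, he⟩ := exists_surjective_nat ℤ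
  obtain ⟨A, hA, hst⟩ := exists_limit e
  refine ⟨A, ?_, ?_⟩
  · intro n
    obtain ⟨k, rfl⟩ := he n
    obtain ⟨⟨a, ha, b, hb, hab⟩, -⟩ := hst k
    unfold repCount
    rw [Set.ncard_eq_one]
    refine ⟨(min a b, max a b), ?_⟩
    ext ⟨c, d⟩
    simp only [Set.mem_ofPred_eq, Set.mem_singleton_iff, Prod.mk.injEq]
    constructor
    · rintro ⟨hc, hd, hcd, h⟩
      have := hA a ha b hb c hc d hd (by linarith)
      omega
    · rintro ⟨rfl, rfl⟩
      rcases le_total a b with h | h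
      · simp [h, ha, hb, hab]
      · simp [h, ha, hb]; linarith
  · have hbdd : IsBoundedUnder (· ≤ ·) atTop
        (fun x : ℝ => (countIn A (-x) x : ℝ) / Real.sqrt x) := by
      refine ⟨4, ?_⟩
      rw [eventually_map]
      filter_upwards [eventually_ge_atTop 1] with x hx using count_le A hA x hx
    have key : ∀ k : ℕ, Real.sqrt 2 / 2 * (1 - 1 / ((k : ℝ) + 1)) ≤
        limsup (fun x : ℝ => (countIn A (-x) x : ℝ) / Real.sqrt x) atTop := by
      intro k
      apply le_limsup_of_frequently_le _ hbdd
      rw [frequently_atTop]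
      intro y
      obtain ⟨m, hm⟩ := exists_nat_ge y
      obtain ⟨-, x, hx, hx0, F, hFA, hFx, hF⟩ := hst (max k m)
      have hkm : (k : ℝ) ≤ (max k m : ℕ) := by exact_mod_cast le_max_left k m
      have hmm : (m : ℝ) ≤ (max k m : ℕ) := by exact_mod_cast le_max_right k m
      refine ⟨x, by linarith, ?_⟩
      have h1 : Real.sqrt 2 / 2 * (1 - 1 / ((k : ℝ) + 1)) ≤
          Real.sqrt 2 / 2 * (1 - 1 / (((max k m : ℕ) : ℝ) + 1)) := by
        gcongr
      refine h1.trans (hF.trans ?_)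
      gcongr
      unfold countIn
      rw [← Set.ncard_coe_finset]
      exact Set.ncard_le_ncard (fun a ha => ⟨hFA ha, hFx a ha⟩) (finite_count A x)
    have ht : Tendsto (fun k : ℕ => Real.sqrt 2 / 2 * (1 - 1 / ((k : ℝ) + 1))) atTop
        (nhds (Real.sqrt 2 / 2 * (1 - 0))) :=
      (tendsto_one_div_add_atTop_nhds_zero_nat.const_sub 1).const_mul _
    rw [sub_zero, mul_one] at ht
    exact le_of_tendsto' ht key
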